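/- Let Y be a real vector space and ≺ a compatible partial preference on Y with positive cone P_≺ and associated vector space L_≺. Let U_≺ be the family of all step-linear functions u : Y → ℝ such that for all y, z ∈ Y: y ≺ z implies u(z − y) > 0, and z − y ∈ L_≺ implies u(z − y) = 0. Then U_≺ is nonempty, and moreover for all y, z ∈ Y: y ≺ z ⟺ u(z − y) > 0 for all u ∈ U_≺, and z − y ∈ L_≺ ⟺ u(z − y) = 0 for all u ∈ U_≺. -/

import Mathlib

open Pointwise

variable {Y : Type*} [AddCommGroup Y] [Module ℝ Y]

/-- The positive cone of a binary relation: `{y | 0 ≺ y}`. -/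
def posCone (r : Y → Y → Prop) : Set Y := {y | r 0 y}

/-- A compatible partial preference: a binary relation compatible with the algebraic
operations which is asymmetric and transitive. -/
structure IsCompatiblePartialPreference (r : Y → Y → Prop) : Prop where
  smul_compat : ∀ ⦃y₁ y₂ : Y⦄ ⦃l : ℝ⦄, 0 < l → r y₁ y₂ → r (l • y₁) (l • y₂)
  add_compat : ∀ ⦃y₁ y₂ : Y⦄ (y : Y), r y₁ y₂ → r (y₁ + y) (y₂ + y)
  asymm : ∀ ⦃y₁ y₂ : Y⦄, r y₁ y₂ → ¬ r y₂ y₁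
  trans : ∀ ⦃y₁ y₂ y₃ : Y⦄, r y₁ y₂ → r y₂ y₃ → r y₁ y₃

/-- A compatible weak preference: a compatible partial preference whose indifference
relation (`y ≍ z` iff neither `y ≺ z` nor `z ≺ y`) is transitive. -/
structure IsCompatibleWeakPreference (r : Y → Y → Prop)
    extends IsCompatiblePartialPreference r : Prop where
  indiff_trans : ∀ ⦃y z u : Y⦄, ¬ r y z → ¬ r z y → ¬ r z u → ¬ r u z → ¬ r y u ∧ ¬ r u y

/-- The majorization relation on the positive cone: `y ⊴ z` iff `μ • y ≺ z` for some `μ > 0`. -/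
def maj (r : Y → Y → Prop) (y z : Y) : Prop := ∃ μ : ℝ, 0 < μ ∧ r (μ • y) z

/-- The equivalence `y ≖ z` : `y ⊴ z` and `z ⊴ y`. -/
def majEquiv (r : Y → Y → Prop) (y z : Y) : Prop := maj r y z ∧ maj r z y

/-- The `≖`-equivalence class of `y` inside the positive cone. -/
def componentOf (r : Y → Y → Prop) (y : Y) : Set Y := {z ∈ posCone r | majEquiv r z y}

/-- Open components of the positive cone: the equivalence classes of `≖`. -/
def IsOpenComponent (r : Y → Y → Prop) (E : Set Y) : Prop :=
  ∃ y ∈ posCone r, E = componentOf r y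

/-- The order `⊴*` on open components: `E₁ ⊴* E₂` iff `y₁ ⊴ y₂` for all `y₁ ∈ E₁`, `y₂ ∈ E₂`. -/
def compLE (r : Y → Y → Prop) (E₁ E₂ : Set Y) : Prop :=
  ∀ y₁ ∈ E₁, ∀ y₂ ∈ E₂, maj r y₁ y₂

/-- The relative algebraic interior (intrinsic core) of a (convex) set. -/
def icr (Q : Set Y) : Set Y :=
  {z ∈ Q | ∀ y ∈ Q, ∃ δ : ℝ, 0 < δ ∧ ∀ t : ℝ, -δ < t → t < δ → z + t • (y - z) ∈ Q}

/-- The algebraic interior (core) of a set. -/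
def algCr (Q : Set Y) : Set Y :=
  {z ∈ Q | ∀ y : Y, ∃ δ : ℝ, 0 < δ ∧ ∀ t : ℝ, -δ < t → t < δ → z + t • (y - z) ∈ Q}

/-- The vector space associated with a convex cone `K`:
`L_K = {h | y + t•h ∈ K for all y ∈ K, t ∈ ℝ}`. -/
def assocSubspace (K : Set Y) : Set Y := {h | ∀ y ∈ K, ∀ t : ℝ, y + t • h ∈ K}

/-- A cone: a set closed under multiplication by positive reals. -/
def IsConeSet (K : Set Y) : Prop := ∀ y ∈ K, ∀ l : ℝ, 0 < l → l • y ∈ K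

/-- A face of a convex set `Q`: a nonempty convex subset `F ⊆ Q` such that whenever a point
`α•u + (1-α)•v` (with `u, v ∈ Q`, `0 < α < 1`) lies in `F`, both `u` and `v` lie in `F`. -/
def IsFaceOf (Q F : Set Y) : Prop :=
  F.Nonempty ∧ Convex ℝ F ∧ F ⊆ Q ∧
    ∀ u ∈ Q, ∀ v ∈ Q, ∀ α : ℝ, 0 < α → α < 1 → α • u + (1 - α) • v ∈ F → u ∈ F ∧ v ∈ F

/-- `F_y`: the members of the family `F` not vanishing at `y`. -/
def Fy (F : Set (Y →ₗ[ℝ] ℝ)) (y : Y) : Set (Y →ₗ[ℝ] ℝ) := {φ ∈ F | φ y ≠ 0}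

/-- `φ` is the least element of `S` with respect to `le`. -/
def IsLeastWrt (le : (Y →ₗ[ℝ] ℝ) → (Y →ₗ[ℝ] ℝ) → Prop) (S : Set (Y →ₗ[ℝ] ℝ))
    (φ : Y →ₗ[ℝ] ℝ) : Prop :=
  φ ∈ S ∧ ∀ ψ ∈ S, le φ ψ

/-- A cortege of linear functions on `Y`: a family `F` of linear functions linearly ordered
by `le` such that every nonempty `F_y` has a least element `φ_y`, and every `φ ∈ F` is `φ_y`
for some `y`. -/
structure IsCortege (F : Set (Y →ₗ[ℝ] ℝ))
    (le : (Y →ₗ[ℝ] ℝ) → (Y →ₗ[ℝ] ℝ) → Prop) : Prop where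
  refl : ∀ φ ∈ F, le φ φ
  antisymm : ∀ φ ∈ F, ∀ ψ ∈ F, le φ ψ → le ψ φ → φ = ψ
  trans : ∀ φ ∈ F, ∀ ψ ∈ F, ∀ χ ∈ F, le φ ψ → le ψ χ → le φ χ
  total : ∀ φ ∈ F, ∀ ψ ∈ F, le φ ψ ∨ le ψ φ
  least_exists : ∀ y : Y, Fy F y = ∅ ∨ ∃ φ, IsLeastWrt le (Fy F y) φ
  surj : ∀ φ ∈ F, ∃ y : Y, IsLeastWrt le (Fy F y) φ

/-- A step-linear function: `u(y) = 0` if `F_y = ∅` and `u(y) = φ_y(y)` otherwise,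
for some cortege `(F, le)`. -/
def IsStepLinear (u : Y → ℝ) : Prop :=
  ∃ (F : Set (Y →ₗ[ℝ] ℝ)) (le : (Y →ₗ[ℝ] ℝ) → (Y →ₗ[ℝ] ℝ) → Prop),
    IsCortege F le ∧
      ∀ y : Y, (Fy F y = ∅ ∧ u y = 0) ∨ ∃ φ, IsLeastWrt le (Fy F y) φ ∧ u y = φ y

/-- The family `U_≺` of step-linear functions monotone w.r.t. `≺` and vanishing on `L_≺`. -/
def stepFamily (r : Y → Y → Prop) : Set (Y → ℝ) :=
  {u | IsStepLinear u ∧ (∀ y z : Y, r y z → 0 < u (z - y)) ∧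
    (∀ y z : Y, z - y ∈ assocSubspace (posCone r) → u (z - y) = 0)}

/-!
Write `P` for the positive cone and `L` for its associated space. Then `P ∪ L` is a pointed cone
with lineality space `L`. By Zorn's lemma every pointed cone extends, without enlarging its
lineality space, to a cone containing `x` or `-x` for every `x`, and the extension can be made to
avoid any prescribed point outside the original cone. Such a total cone linearly orders the quotient
by its lineality space, and the Hahn embedding theorem maps this ordered quotient into real Hahn
series. A linear map into Hahn series composed with the leading coefficient is step-linear, since
its coefficient functionals form a cortege, so every point outside `P ∪ L` is made negative by some
member of the family.
-/

section PointedCone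

variable {𝕜 E : Type*} [Field 𝕜] [LinearOrder 𝕜] [IsStrictOrderedRing 𝕜]
  [AddCommGroup E] [Module 𝕜 E]

lemma lineal_sup_hull_singleton {C : PointedCone 𝕜 E} {x : E} (hx : -x ∉ C) :
    (C ⊔ PointedCone.hull 𝕜 {x}).lineal = C.lineal := by
  refine le_antisymm (fun y hy ↦ ?_) (PointedCone.gc_ofSubmodule_lineal.monotone_u le_sup_left)
  simp only [PointedCone.mem_lineal, Submodule.mem_sup, Submodule.mem_span_singleton] at hy
  obtain ⟨⟨p, hp, _, ⟨⟨a, ha⟩, rfl⟩, hpa⟩, ⟨q, hq, _, ⟨⟨b, hb⟩, rfl⟩, hqb⟩⟩ := hy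
  rw [Nonneg.mk_smul] at hpa hqb
  have hsum : p + q = (a + b) • -x := by
    rw [smul_neg, eq_neg_iff_add_eq_zero, add_smul, add_add_add_comm, hpa, hqb, add_neg_cancel]
  have hab : ¬ 0 < a + b := fun hpos ↦
    hx ((C.smul_mem_iff hpos).1 (hsum ▸ C.add_mem hp hq))
  obtain rfl : a = 0 := by linarith
  obtain rfl : b = 0 := by linarith
  rw [zero_smul, add_zero] at hpa hqb
  exact PointedCone.mem_lineal.2 ⟨hpa ▸ hp, hqb ▸ hq⟩

lemma lineal_sSup_le_of_isChain {S : Set (PointedCone 𝕜 E)} (hne : S.Nonempty)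
    (hS : IsChain (· ≤ ·) S) {L : Submodule 𝕜 E} (hL : ∀ C ∈ S, C.lineal ≤ L) :
    (sSup S).lineal ≤ L := by
  rintro x ⟨hx, hnx⟩
  obtain ⟨C, hC, hxC⟩ := (Submodule.mem_sSup_of_directed hne hS.directedOn).1 hx
  obtain ⟨D, hD, hnxD⟩ := (Submodule.mem_sSup_of_directed hne hS.directedOn).1 hnx
  rcases hS.total hC hD with hCD | hDC
  · exact hL D hD ⟨hCD hxC, hnxD⟩
  · exact hL C hC ⟨hxC, hDC hnxD⟩

lemma exists_le_hasMemOrNegMem_lineal_eq (C : PointedCone 𝕜 E) :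
    ∃ D : PointedCone 𝕜 E, C ≤ D ∧ HasMemOrNegMem D ∧ D.lineal = C.lineal := by
  obtain ⟨D, hCD, hDmax⟩ := zorn_le_nonempty₀ {D : PointedCone 𝕜 E | D.lineal ≤ C.lineal}
    (fun S hS hchain B hB ↦ ⟨sSup S, lineal_sSup_le_of_isChain ⟨B, hB⟩ hchain hS,
      fun _ ↦ le_sSup⟩) C (le_refl C.lineal)
  refine ⟨D, hCD, ⟨fun x ↦ or_iff_not_imp_right.2 fun hnx ↦ ?_⟩,
    hDmax.prop.antisymm (PointedCone.gc_ofSubmodule_lineal.monotone_u hCD)⟩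
  have hsup : D ⊔ PointedCone.hull 𝕜 {x} ≤ D :=
    hDmax.le_of_ge ((lineal_sup_hull_singleton hnx).trans_le hDmax.prop) le_sup_left
  exact hsup (Submodule.mem_sup_right (Submodule.mem_span_singleton_self x))

lemma exists_le_hasMemOrNegMem_lineal_eq_mem_iff (C : PointedCone 𝕜 E) (x : E) :
    ∃ D : PointedCone 𝕜 E,
      C ≤ D ∧ HasMemOrNegMem D ∧ D.lineal = C.lineal ∧ (x ∈ D ↔ x ∈ C) := by
  by_cases hx : x ∈ C
  · obtain ⟨D, hCD, hD, hlineal⟩ := exists_le_hasMemOrNegMem_lineal_eq C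
    exact ⟨D, hCD, hD, hlineal, iff_of_true (hCD hx) hx⟩
  · obtain ⟨D, hCD, hD, hlineal⟩ :=
      exists_le_hasMemOrNegMem_lineal_eq (C ⊔ PointedCone.hull 𝕜 {-x})
    rw [lineal_sup_hull_singleton (by rwa [neg_neg])] at hlineal
    have hnx : -x ∈ D := hCD (Submodule.mem_sup_right (Submodule.mem_span_singleton_self _))
    refine ⟨D, le_sup_left.trans hCD, hD, hlineal, iff_of_false (fun hxD ↦ hx ?_) hx⟩
    have hx_lineal : x ∈ C.lineal := hlineal ▸ ⟨hxD, hnx⟩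
    exact hx_lineal.1

/-- The image of a pointed cone in the quotient by its lineality space, as the cone of nonnegative
elements of a group order on that quotient. -/
def salientQuotient (C : PointedCone 𝕜 E) : AddGroupCone (E ⧸ C.lineal) where
  toAddSubmonoid := (C.map C.lineal.mkQ).toAddSubmonoid
  eq_zero_of_mem_of_neg_mem' := by
    rintro _ ⟨x, hx, rfl⟩ ⟨y, hy, hyx⟩
    have hxy : y + x ∈ C.lineal := by
      rw [← Submodule.Quotient.mk_eq_zero, Submodule.Quotient.mk_add]
      exact eq_neg_iff_add_eq_zero.1 hyx
    have hnx : -x ∈ C := by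
      simpa using C.add_mem hy hxy.2
    exact (Submodule.Quotient.mk_eq_zero _).2 ⟨hx, hnx⟩

lemma mk_mem_salientQuotient {C : PointedCone 𝕜 E} {x : E} :
    Submodule.Quotient.mk x ∈ salientQuotient C ↔ x ∈ C := by
  refine ⟨fun ⟨y, hy, hyx⟩ ↦ ?_, fun hx ↦ ⟨x, hx, rfl⟩⟩
  have hxy : x - y ∈ C.lineal := (Submodule.Quotient.eq _).1 hyx.symm
  simpa using C.add_mem hy hxy.1

end PointedCone

section OrderedModule

variable {M : Type*} [AddCommGroup M] [LinearOrder M] [IsOrderedAddMonoid M]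
  [Module ℝ M] [IsOrderedModule ℝ M]

lemma orderAddMonoidHom_map_real_smul (f : M →+o ℝ) (t : ℝ) (x : M) : f (t • x) = t • f x := by
  wlog hx : 0 ≤ x generalizing x
  · simpa using this (-x) (neg_nonneg.2 (le_of_not_ge hx))
  let g : ℝ →+ ℝ := f.toAddMonoidHom.comp ((smulAddHom ℝ M).flip x)
  have hmono : Monotone g := fun _ _ hst ↦ f.monotone' (smul_le_smul_of_nonneg_right hst hx)
  have hcont : Continuous g :=
    MeasureTheory.Measure.AddMonoidHom.continuous_of_measurable g hmono.measurable
  simpa [g] using map_real_smul g hcont t 1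

variable (M)

lemma nonempty_hahnEmbedding_seed_real : Nonempty (HahnEmbedding.Seed ℝ M ℝ) := by
  obtain ⟨strata⟩ : Nonempty (HahnEmbedding.ArchimedeanStrata ℝ M) := inferInstance
  choose f hf using fun c ↦
    Archimedean.exists_orderAddMonoidHom_real_injective (strata.stratum c)
  have hmod (c : FiniteArchimedeanClass M) : IsOrderedModule ℝ (strata.stratum c) :=
    .of_smul_nonneg fun t ht x hx ↦ show (0 : M) ≤ t • (x : M) from smul_nonneg ht hx
  exact ⟨strata,
    fun c ↦ { (f c).toAddMonoidHom with map_smul' := orderAddMonoidHom_map_real_smul (f c) },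
    fun c ↦ (f c).monotone'.strictMono_of_injective (hf c)⟩

lemma exists_strictMono_linearMap_lex_hahnSeries :
    ∃ f : M →ₗ[ℝ] Lex (HahnSeries (FiniteArchimedeanClass M) ℝ), StrictMono f := by
  have := nonempty_hahnEmbedding_seed_real M
  obtain ⟨f, hf, -⟩ := hahnEmbedding_isOrderedModule (K := ℝ) (M := M) (R := ℝ)
  exact ⟨f, hf⟩

end OrderedModule

section Cortege

variable {ι : Type*} {φ : ι → Y →ₗ[ℝ] ℝ}

lemma Fy_range_eq_empty_iff {y : Y} : Fy (Set.range φ) y = ∅ ↔ ∀ i, φ i y = 0 := by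
  simp [Fy, Set.eq_empty_iff_forall_notMem]

variable [LinearOrder ι]

lemma isLeastWrt_map_of_isLeast {y : Y} {i : ι} (hi : IsLeast {j | φ j y ≠ 0} i) :
    IsLeastWrt (Relation.Map (· ≤ ·) φ φ) (Fy (Set.range φ) y) (φ i) := by
  refine ⟨⟨⟨i, rfl⟩, hi.1⟩, ?_⟩
  rintro _ ⟨⟨j, rfl⟩, hj⟩
  exact ⟨i, j, hi.2 hj, rfl, rfl⟩

lemma injective_of_forall_exists_isLeast
    (hattained : ∀ i, ∃ y, IsLeast {j | φ j y ≠ 0} i) : Function.Injective φ := by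
  have hle {i j : ι} (hij : φ i = φ j) : i ≤ j := by
    obtain ⟨y, hy⟩ := hattained i
    exact hy.2 (show φ j y ≠ 0 from hij ▸ hy.1)
  exact fun i j hij ↦ (hle hij).antisymm (hle hij.symm)

lemma isCortege_range
    (hleast : ∀ y, (∀ i, φ i y = 0) ∨ ∃ i, IsLeast {j | φ j y ≠ 0} i)
    (hattained : ∀ i, ∃ y, IsLeast {j | φ j y ≠ 0} i) :
    IsCortege (Set.range φ) (Relation.Map (· ≤ ·) φ φ) := by
  have hφ := injective_of_forall_exists_isLeast hattained
  have map_iff (i j : ι) : Relation.Map (· ≤ ·) φ φ (φ i) (φ j) ↔ i ≤ j :=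
    Relation.map_apply_apply hφ hφ _ _ _
  constructor
  case refl =>
    rintro _ ⟨i, rfl⟩
    exact (map_iff i i).2 le_rfl
  case antisymm =>
    rintro _ ⟨i, rfl⟩ _ ⟨j, rfl⟩ hij hji
    exact congrArg φ (((map_iff i j).1 hij).antisymm ((map_iff j i).1 hji))
  case trans =>
    rintro _ ⟨i, rfl⟩ _ ⟨j, rfl⟩ _ ⟨k, rfl⟩ hij hjk
    exact (map_iff i k).2 (((map_iff i j).1 hij).trans ((map_iff j k).1 hjk))
  case total =>
    rintro _ ⟨i, rfl⟩ _ ⟨j, rfl⟩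
    simpa only [map_iff] using le_total i j
  case least_exists =>
    exact fun y ↦ (hleast y).imp Fy_range_eq_empty_iff.2
      fun ⟨i, hi⟩ ↦ ⟨φ i, isLeastWrt_map_of_isLeast hi⟩
  case surj =>
    rintro _ ⟨i, rfl⟩
    exact (hattained i).imp fun y ↦ isLeastWrt_map_of_isLeast

end Cortege

section StepLinear

lemma isStepLinear_leadingCoeff {Γ : Type*} [LinearOrder Γ] (g : Y →ₗ[ℝ] HahnSeries Γ ℝ) :
    IsStepLinear fun y ↦ (g y).leadingCoeff := by
  let ι := {γ : Γ // ∃ y, (g y).orderTop = γ}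
  let φ (i : ι) : Y →ₗ[ℝ] ℝ := HahnSeries.coeff.linearMap i.1 ∘ₗ g
  have isLeast_of_orderTop_eq {y : Y} {i : ι} (hi : (g y).orderTop = i.1) :
      IsLeast {j | φ j y ≠ 0} i :=
    ⟨HahnSeries.coeff_orderTop_ne hi, fun _ hj ↦ Subtype.coe_le_coe.1 <|
      WithTop.coe_le_coe.1 (hi.symm.trans_le (HahnSeries.orderTop_le_of_coeff_ne_zero hj))⟩
  have zero_or_orderTop_eq (y : Y) : g y = 0 ∨ ∃ i : ι, (g y).orderTop = i.1 := by
    refine or_iff_not_imp_left.2 fun hy ↦ ?_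
    obtain ⟨γ, hγ⟩ := WithTop.ne_top_iff_exists.1 (HahnSeries.orderTop_ne_top.2 hy)
    exact ⟨⟨γ, y, hγ.symm⟩, hγ.symm⟩
  refine ⟨Set.range φ, Relation.Map (· ≤ ·) φ φ, isCortege_range (fun y ↦ ?_) ?_, fun y ↦ ?_⟩
  · exact (zero_or_orderTop_eq y).imp (fun hy i ↦ by simp [φ, hy])
      fun ⟨i, hi⟩ ↦ ⟨i, isLeast_of_orderTop_eq hi⟩
  · rintro ⟨γ, y, hy⟩
    exact ⟨y, isLeast_of_orderTop_eq hy⟩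
  · refine (zero_or_orderTop_eq y).imp (fun hy ↦ ?_) fun ⟨i, hi⟩ ↦
      ⟨φ i, isLeastWrt_map_of_isLeast (isLeast_of_orderTop_eq hi), ?_⟩
    · exact ⟨Fy_range_eq_empty_iff.2 fun i ↦ by simp [φ, hy], by simp [hy]⟩
    · simp [HahnSeries.leadingCoeff, hi, φ]

lemma exists_isStepLinear_nonneg_iff_nonneg {M : Type*} [AddCommGroup M] [LinearOrder M]
    [IsOrderedAddMonoid M] [Module ℝ M] [IsOrderedModule ℝ M] (π : Y →ₗ[ℝ] M) :
    ∃ u : Y → ℝ, IsStepLinear u ∧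
      ∀ y, (0 ≤ u y ↔ 0 ≤ π y) ∧ (u y = 0 ↔ π y = 0) := by
  obtain ⟨f, hf⟩ := exists_strictMono_linearMap_lex_hahnSeries M
  refine ⟨_, isStepLinear_leadingCoeff ((ofLexLinearEquiv ℝ _).toLinearMap ∘ₗ f ∘ₗ π), fun y ↦ ?_⟩
  simp only [LinearMap.comp_apply, LinearEquiv.coe_coe, coe_ofLexLinearEquiv]
  constructor
  · rw [HahnSeries.leadingCoeff_nonneg_iff, ← map_zero f, hf.le_iff_le]
  · rw [HahnSeries.leadingCoeff_eq_zero, ofLex_eq_zero, map_eq_zero_iff f hf.injective]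

lemma exists_isStepLinear_nonneg_iff_mem (C : PointedCone ℝ Y) [HasMemOrNegMem C] :
    ∃ u : Y → ℝ, IsStepLinear u ∧
      ∀ y, (0 ≤ u y ↔ y ∈ C) ∧ (u y = 0 ↔ y ∈ C.lineal) := by
  classical
  have : HasMemOrNegMem (salientQuotient C) :=
    ⟨(Submodule.Quotient.mk_surjective _).forall.2 fun y ↦ by
      simpa only [← Submodule.Quotient.mk_neg, mk_mem_salientQuotient] using mem_or_neg_mem C y⟩
  let : LinearOrder (Y ⧸ C.lineal) := .mkOfAddGroupCone (salientQuotient C)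
  have : IsOrderedAddMonoid (Y ⧸ C.lineal) := .mkOfCone (salientQuotient C)
  have : IsOrderedModule ℝ (Y ⧸ C.lineal) :=
    (C.map C.lineal.mkQ).to_isOrderedModule fun _ _ ↦ Iff.rfl
  obtain ⟨u, hu, hu_sign⟩ := exists_isStepLinear_nonneg_iff_nonneg C.lineal.mkQ
  refine ⟨u, hu, fun y ↦ ⟨(hu_sign y).1.trans ?_, (hu_sign y).2.trans ?_⟩⟩
  · rw [← mk_mem_salientQuotient (C := C), ← sub_zero (Submodule.Quotient.mk y)]
    rfl
  · exact Submodule.Quotient.mk_eq_zero _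

end StepLinear

section AssociatedSubspace

/-- `assocSubspace K` bundled as a submodule. -/
def assocSubmodule (K : Set Y) : Submodule ℝ Y where
  carrier := assocSubspace K
  zero_mem' y hy t := by simpa using hy
  add_mem' {a b} ha hb y hy t := by
    rw [smul_add, ← add_assoc]
    exact hb _ (ha y hy t) t
  smul_mem' c a ha y hy t := by
    rw [smul_smul]
    exact ha y hy _

lemma add_mem_of_mem_assocSubmodule {K : Set Y} {y l : Y} (hy : y ∈ K)
    (hl : l ∈ assocSubmodule K) : y + l ∈ K := by
  simpa using hl y hy 1

/-- The convex cone `K` with its associated vector space adjoined: for the positive cone of a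
partial preference, the nonnegative cone of the corresponding preorder. -/
def weakCone (K : ConvexCone ℝ Y) : PointedCone ℝ Y where
  carrier := K ∪ assocSubmodule (K : Set Y)
  zero_mem' := Or.inr (zero_mem _)
  add_mem' := by
    rintro x y (hx | hx) (hy | hy)
    · exact Or.inl (K.add_mem hx hy)
    · exact Or.inl (add_mem_of_mem_assocSubmodule hx hy)
    · exact Or.inl (add_comm y x ▸ add_mem_of_mem_assocSubmodule hy hx)
    · exact Or.inr (add_mem hx hy)
  smul_mem' := by
    rintro ⟨t, ht⟩ x (hx | hx)
    · rcases ht.eq_or_lt with rfl | ht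
      · exact Or.inr (by simp)
      · exact Or.inl (K.smul_mem ht hx)
    · exact Or.inr (Submodule.smul_mem _ t hx)

variable {K : ConvexCone ℝ Y}

lemma neg_notMem_weakCone_of_blunt (hK : K.Blunt) {x : Y} (hx : x ∈ K) : -x ∉ weakCone K := by
  rintro (hnx | hnx)
  · exact hK (add_neg_cancel x ▸ K.add_mem hx hnx)
  · exact hK (add_neg_cancel x ▸ add_mem_of_mem_assocSubmodule hx hnx)

lemma lineal_weakCone_of_blunt (hK : K.Blunt) :
    (weakCone K).lineal = assocSubmodule (K : Set Y) := by
  ext x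
  refine ⟨fun ⟨hx, hnx⟩ ↦ ?_, fun hx ↦ ⟨Or.inr hx, Or.inr (neg_mem hx)⟩⟩
  exact hx.resolve_left fun hxK ↦ neg_notMem_weakCone_of_blunt hK hxK hnx

lemma exists_isStepLinear_pos_of_blunt (hK : K.Blunt) (x : Y) :
    ∃ u : Y → ℝ, IsStepLinear u ∧ (∀ y ∈ K, 0 < u y) ∧
      (∀ y ∈ assocSubmodule (K : Set Y), u y = 0) ∧ (0 ≤ u x ↔ x ∈ weakCone K) := by
  obtain ⟨C, hKC, _, hlineal, hx⟩ :=
    exists_le_hasMemOrNegMem_lineal_eq_mem_iff (weakCone K) x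
  obtain ⟨u, hu, hu_sign⟩ := exists_isStepLinear_nonneg_iff_mem C
  simp only [hlineal] at hu_sign
  refine ⟨u, hu, fun y hy ↦ ?_, fun y hy ↦ ?_, (hu_sign x).1.trans hx⟩
  · have hy_nonneg : 0 ≤ u y := (hu_sign y).1.2 (hKC (Or.inl hy))
    have hy_ne : u y ≠ 0 := fun h0 ↦
      neg_notMem_weakCone_of_blunt hK hy ((hu_sign y).2.1 h0).2
    exact hy_nonneg.lt_of_ne' hy_ne
  · exact (hu_sign y).2.2 (lineal_weakCone_of_blunt hK ▸ hy)

end AssociatedSubspace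

namespace IsCompatiblePartialPreference

variable {r : Y → Y → Prop}

lemma rel_iff_sub_mem_posCone (h : IsCompatiblePartialPreference r) {y z : Y} :
    r y z ↔ z - y ∈ posCone r := by
  constructor
  · intro hyz
    simpa [posCone, sub_eq_add_neg] using h.add_compat (-y) hyz
  · intro hyz
    simpa using h.add_compat y (show r 0 (z - y) from hyz)

/-- `posCone r` bundled as a convex cone. -/
def convexCone (h : IsCompatiblePartialPreference r) : ConvexCone ℝ Y where
  carrier := posCone r
  smul_mem' t ht x hx := by simpa [posCone] using h.smul_compat ht hx
  add_mem' x hx y hy := h.trans hy (by simpa using h.add_compat y hx)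

lemma blunt_convexCone (h : IsCompatiblePartialPreference r) : h.convexCone.Blunt :=
  fun h0 ↦ h.asymm h0 h0

lemma exists_mem_stepFamily_nonneg_iff (h : IsCompatiblePartialPreference r) (x : Y) :
    ∃ u ∈ stepFamily r, 0 ≤ u x ↔ x ∈ posCone r ∨ x ∈ assocSubspace (posCone r) := by
  obtain ⟨u, hu, hu_pos, hu_zero, hx⟩ := exists_isStepLinear_pos_of_blunt h.blunt_convexCone x
  exact ⟨u,
    ⟨hu, fun y z hyz ↦ hu_pos _ (h.rel_iff_sub_mem_posCone.1 hyz), fun _ _ ↦ hu_zero _⟩, hx⟩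

end IsCompatiblePartialPreference

/-- `U_≺` is nonempty, and `y ≺ z ⟺ u(z−y) > 0` for all `u ∈ U_≺`, and
`z − y ∈ L_≺ ⟺ u(z−y) = 0` for all `u ∈ U_≺`. -/
theorem stmt_19 (r : Y → Y → Prop) (h : IsCompatiblePartialPreference r) :
    (stepFamily r).Nonempty ∧
    (∀ y z : Y, r y z ↔ ∀ u ∈ stepFamily r, 0 < u (z - y)) ∧
    (∀ y z : Y, z - y ∈ assocSubspace (posCone r) ↔
      ∀ u ∈ stepFamily r, u (z - y) = 0) := by
  refine ⟨?_, fun y z ↦ ⟨fun hyz u hu ↦ hu.2.1 y z hyz, fun hpos ↦ ?_⟩,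
    fun y z ↦ ⟨fun hyz u hu ↦ hu.2.2 y z hyz, fun hzero ↦ ?_⟩⟩
  · obtain ⟨u, hu, -⟩ := h.exists_mem_stepFamily_nonneg_iff 0
    exact ⟨u, hu⟩
  · obtain ⟨u, hu, hu_iff⟩ := h.exists_mem_stepFamily_nonneg_iff (z - y)
    have hL : z - y ∉ assocSubspace (posCone r) := fun hL ↦
      (hpos u hu).ne' (hu.2.2 y z hL)
    exact h.rel_iff_sub_mem_posCone.2 ((hu_iff.1 (hpos u hu).le).resolve_right hL)
  · obtain ⟨u, hu, hu_iff⟩ := h.exists_mem_stepFamily_nonneg_iff (z - y)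
    have hP : z - y ∉ posCone r := fun hP ↦
      (hu.2.1 y z (h.rel_iff_sub_mem_posCone.2 hP)).ne' (hzero u hu)
    exact (hu_iff.1 (hzero u hu).ge).resolve_left hP
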